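/- arXiv:1004.2327 — 2 statements merged into one kernel-verified Lean document; each statement's English description precedes it below -/
import Mathlib

section
/- Let q be a prime and n ≥ 1 an integer. Let m_0 ≥ m_1 ≥ m_2 ≥ … ≥ m_{n+1} be integers with m_1 > m_2, and set m := m_1 − m_2 ≥ 1. Let a_1,…,a_n, b, x_1,…,x_n, y ∈ ℤ_q (the q-adic integers) and set w := y − (Σ_{j=1}^n a_j x_j + b) ∈ ℤ_q. Define (n+2)×(n+2) matrices over ℚ_q, with rows and columns indexed 0,…,n+1: α has first row (q^{−m_0}, −q^{−m_0} a_1, …, −q^{−m_0} a_n, −q^{−m_0 − m_1 + m_2} b), diagonal entries q^{−m_{j+1}} in position (j,j) for 1 ≤ j ≤ n, entry q^{−m_1} in position (n+1, n+1), and all other entries 0; β is the identity matrix modified in its last column, with entries q^{−m_1+m_2} y in position (0, n+1) and q^{−m_1+m_2} x_j in position (j, n+1) for 1 ≤ j ≤ n, and 1 in position (n+1, n+1). Then, with |·|_q the q-adic absolute value normalized by |q|_q = 1/q: (i) if w ∈ q^m ℤ_q then max over all entries z of αβ of |z|_q equals q^{m_0}; (ii) if w − q^{m−1} ∈ q^m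 ℤ_q then this maximum equals q^{m_0 + 1}; and in both cases, for every j with 2 ≤ j ≤ n+2, the maximum of |det M|_q over all j×j submatrices M of αβ equals q^{m_0 + m_1 + … + m_{j−1}}. -/
open Matrix Function

/-!
The product `αβ` factors as `D * U * E`, where `D` and `E` are diagonal and `U` is integral and
upper unitriangular: `U` has first row `(1, -a₁, …, -aₙ, w)`, last column `(w, x₁, …, xₙ, 1)` and
the identity elsewhere, the diagonal of `D` is `q^(-r_i)` with
`(r_0, …, r_{n+1}) = (m₀, m₂, m₃, …, m_{n+1}, m₂)`, and `E = diag(1, …, 1, q^(-m))`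
(`mul_entry`).

A `j × j` minor is therefore an integral minor of `U` times a product of `j` distinct entries of `D`
times at most one factor `q^(-m)`. The `j ≥ 2` largest `r_i` are `m₀, m₂, m₂, m₃, …, m_{j-1}`, and
`m₂ + m = m₁`, so the minor is at most `q^(m₀ + ⋯ + m_{j-1})` (`minor_le`).
The minor on the rows and columns `0, 1, …, j-2, n+1` is upper triangular and attains the bound
(`minor_ext`).

For single entries, the only one that can exceed `q^(m₀)` is `q^(-m₀-m) w` in the upper right
corner. Its absolute value is at most `q^(m₀)` if `q^m ∣ w`, and is `q^(m₀+1)` if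
`w ≡ q^(m-1)` modulo `q^m`.
-/

/-! ### The factors of the product -/

/-- Index of the row `i` in the decreasing list `rowExp` of row exponents: the last row comes in
second place, after row `0`, and the rows `1, …, n` are shifted by one. -/
def rowIdx (n : ℕ) (i : Fin (n + 2)) : ℕ :=
  if i = 0 then 0 else if i = Fin.last (n + 1) then 1 else i.val + 1

/-- The decreasing list `m₀, m₂, m₂, m₃, m₄, …` of row exponents. -/
def rowExp (e : ℕ → ℤ) (k : ℕ) : ℤ := if k = 1 then e 2 else e k

/-- The integral unitriangular middle factor of `αβ`. -/
noncomputable def midMat {q : ℕ} [Fact q.Prime] (n : ℕ) (a x : ℕ → ℤ_[q]) (w : ℤ_[q]) :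
    Matrix (Fin (n + 2)) (Fin (n + 2)) ℤ_[q] :=
  Matrix.of fun i j =>
    if i = j then 1
    else if i = 0 then (if j = Fin.last (n + 1) then w else -a j.val)
    else if j = Fin.last (n + 1) then x i.val else 0

/-- The diagonal of the right factor of `αβ`. -/
noncomputable def colFac (q : ℕ) [Fact q.Prime] (n m : ℕ) (j : Fin (n + 2)) : ℚ_[q] :=
  if j = Fin.last (n + 1) then (q : ℚ_[q]) ^ (-(m : ℤ)) else 1

/-! ### Sums of row exponents -/

lemma rowIdx_injective (n : ℕ) : Injective (rowIdx n) := by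
  intro i j h
  simp only [rowIdx, Fin.ext_iff, Fin.val_last, Fin.val_zero] at h ⊢
  split_ifs at h <;> omega

lemma rowIdx_lt (n : ℕ) (hn : 1 ≤ n) (i : Fin (n + 2)) : rowIdx n i < n + 2 := by
  have := i.isLt
  simp only [rowIdx, Fin.ext_iff, Fin.val_last, Fin.val_zero]
  split_ifs <;> omega

/-- For a decreasing sequence, the sum over any `k`-element set of indices is at most the sum of
the first `k` terms. -/
lemma sum_le_sum_range_card (N : ℕ) (s : ℕ → ℤ)
    (hs : ∀ i j, i ≤ j → j < N → s j ≤ s i) (T : Finset ℕ) (hT : ∀ t ∈ T, t < N) :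
    ∑ t ∈ T, s t ≤ ∑ t ∈ Finset.range T.card, s t := by
  induction T using Finset.induction_on_max with
  | empty => simp
  | insert M T hM ih =>
    have hnot : M ∉ T := fun h => lt_irrefl _ (hM M h)
    rw [Finset.sum_insert hnot, Finset.card_insert_of_notMem hnot, Finset.sum_range_succ, add_comm]
    have hcard : T.card ≤ M := by
      have : T ⊆ Finset.range M := fun t ht => Finset.mem_range.2 (hM t ht)
      simpa using Finset.card_le_card this
    exact add_le_add (ih fun t ht => hT t (Finset.mem_insert_of_mem ht))
      (hs _ _ hcard (hT M (Finset.mem_insert_self _ _)))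

lemma rowExp_anti (n : ℕ) (e : ℕ → ℤ) (hn : 1 ≤ n) (he : ∀ j, j ≤ n → e (j + 1) ≤ e j) :
    ∀ i j, i ≤ j → j < n + 2 → rowExp e j ≤ rowExp e i := by
  intro i j hij
  induction j, hij using Nat.le_induction with
  | base => intro _; exact le_rfl
  | succ j hij ih =>
    intro hj
    refine le_trans ?_ (ih (by omega))
    have h0 := he 0 (by omega)
    have h1 := he 1 (by omega)
    have h2 := he j (by omega)
    rcases j with _ | _ | j
    · simp only [rowExp]; norm_num at *; linarith
    · simp [rowExp]
    · simpa [rowExp] using h2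

lemma sum_rowExp (e : ℕ → ℤ) (m : ℕ) (hme : e 1 = e 2 + m) (jj : ℕ) (hj : 2 ≤ jj) :
    ∑ t ∈ Finset.range jj, rowExp e t + m = ∑ t ∈ Finset.range jj, e t := by
  induction jj, hj using Nat.le_induction with
  | base => simp [Finset.sum_range_succ, rowExp, hme]; ring
  | succ k hk ih =>
    rw [Finset.sum_range_succ, Finset.sum_range_succ, ← ih]
    have : rowExp e k = e k := by simp [rowExp]; omega
    rw [this]; ring

lemma sum_rowExp_le (n : ℕ) (e : ℕ → ℤ) (hn : 1 ≤ n) (he : ∀ j, j ≤ n → e (j + 1) ≤ e j)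
    (m : ℕ) (hme : e 1 = e 2 + m) (jj : ℕ) (hj : 2 ≤ jj)
    (r : Fin jj → Fin (n + 2)) (hr : Injective r) :
    ∑ k, rowExp e (rowIdx n (r k)) + m ≤ ∑ t ∈ Finset.range jj, e t := by
  rw [← sum_rowExp e m hme jj hj]
  have hinj : Injective fun k => rowIdx n (r k) := (rowIdx_injective n).comp hr
  have := sum_le_sum_range_card (n + 2) (rowExp e) (rowExp_anti n e hn he)
    (Finset.univ.image fun k => rowIdx n (r k)) (by
      intro t ht
      obtain ⟨k, -, rfl⟩ := Finset.mem_image.1 ht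
      exact rowIdx_lt n hn _)
  rw [Finset.sum_image (fun _ _ _ _ h => hinj h), Finset.card_image_of_injective _ hinj,
    Finset.card_univ, Fintype.card_fin] at this
  linarith

/-! ### Minors -/

section

variable {q : ℕ} [Fact q.Prime]

lemma norm_q_zpow (z : ℤ) : ‖(q : ℚ_[q]) ^ (-z)‖ = (q : ℝ) ^ z := by
  rw [Padic.norm_p_zpow, neg_neg]

lemma one_lt_q : (1 : ℝ) < q := by exact_mod_cast (Fact.out : q.Prime).one_lt

lemma norm_colFac_prod_le (n m jj : ℕ) (c : Fin jj → Fin (n + 2)) (hc : Injective c) :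
    ‖∏ k, colFac q n m (c k)‖ ≤ (q : ℝ) ^ (m : ℤ) := by
  by_cases h : ∃ k, c k = Fin.last (n + 1)
  · obtain ⟨k, hk⟩ := h
    have : ∀ i, colFac q n m (c i) = if i = k then (q : ℚ_[q]) ^ (-(m : ℤ)) else 1 := by
      intro i
      simp only [colFac, ← hk, hc.eq_iff]
    simp only [this, Finset.prod_ite_eq', Finset.mem_univ, if_true]
    exact (norm_q_zpow _).le
  · push Not at h
    have : ∀ i, colFac q n m (c i) = 1 := fun i => by simp [colFac, h i]
    simp only [this, Finset.prod_const_one, norm_one]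
    exact one_le_zpow₀ one_lt_q.le (by positivity)

/-- The factorization `αβ = D * U * E`, for the matrix `C = αβ` given by its entries, yields the
corresponding factorization of minors. -/
lemma det_minor (n m : ℕ) (e : ℕ → ℤ) (U : Matrix (Fin (n + 2)) (Fin (n + 2)) ℤ_[q])
    (C : Matrix (Fin (n + 2)) (Fin (n + 2)) ℚ_[q])
    (hC : ∀ i j, C i j = (q : ℚ_[q]) ^ (-(rowExp e (rowIdx n i))) * (U i j : ℚ_[q])
      * colFac q n m j) (jj : ℕ) (r c : Fin jj → Fin (n + 2)) :
    (C.submatrix r c).det = (∏ k, (q : ℚ_[q]) ^ (-(rowExp e (rowIdx n (r k)))))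
      * ((U.submatrix r c).det : ℚ_[q]) * ∏ k, colFac q n m (c k) := by
  have : C.submatrix r c = Matrix.diagonal (fun k => (q : ℚ_[q]) ^ (-(rowExp e (rowIdx n (r k)))))
      * (U.submatrix r c).map (PadicInt.Coe.ringHom (p := q))
      * Matrix.diagonal (fun k => colFac q n m (c k)) := by
    ext i j
    simp only [Matrix.mul_diagonal, Matrix.diagonal_mul, Matrix.submatrix_apply, Matrix.map_apply,
      hC]
    rfl
  rw [this, Matrix.det_mul, Matrix.det_mul, Matrix.det_diagonal, Matrix.det_diagonal]
  congr 2
  exact ((PadicInt.Coe.ringHom (p := q)).map_det _).symm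

lemma norm_row_prod (n : ℕ) (e : ℕ → ℤ) (jj : ℕ) (r : Fin jj → Fin (n + 2)) :
    ‖∏ k, (q : ℚ_[q]) ^ (-(rowExp e (rowIdx n (r k))))‖
      = (q : ℝ) ^ (∑ k, rowExp e (rowIdx n (r k))) := by
  have hq : (q : ℝ) ≠ 0 := (zero_lt_one.trans one_lt_q).ne'
  rw [norm_prod]
  simp only [norm_q_zpow]
  induction (Finset.univ : Finset (Fin jj)) using Finset.induction_on with
  | empty => simp
  | insert k T hk ih => rw [Finset.prod_insert hk, Finset.sum_insert hk, zpow_add₀ hq, ih]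

lemma minor_le (n m : ℕ) (hn : 1 ≤ n) (e : ℕ → ℤ) (he : ∀ j, j ≤ n → e (j + 1) ≤ e j)
    (hme : e 1 = e 2 + m) (U : Matrix (Fin (n + 2)) (Fin (n + 2)) ℤ_[q])
    (C : Matrix (Fin (n + 2)) (Fin (n + 2)) ℚ_[q])
    (hC : ∀ i j, C i j = (q : ℚ_[q]) ^ (-(rowExp e (rowIdx n i))) * (U i j : ℚ_[q])
      * colFac q n m j) (jj : ℕ) (hj : 2 ≤ jj) (r c : Fin jj → Fin (n + 2))
    (hr : Injective r) (hc : Injective c) :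
    ‖(C.submatrix r c).det‖ ≤ (q : ℝ) ^ (∑ i ∈ Finset.range jj, e i) := by
  have hq0 : (0 : ℝ) < q := zero_lt_one.trans one_lt_q
  rw [det_minor n m e U C hC, norm_mul, norm_mul, norm_row_prod]
  calc _ ≤ (q : ℝ) ^ (∑ k, rowExp e (rowIdx n (r k))) * 1 * (q : ℝ) ^ (m : ℤ) := by
        gcongr
        · exact PadicInt.norm_le_one _
        · exact norm_colFac_prod_le n m jj c hc
    _ = (q : ℝ) ^ (∑ k, rowExp e (rowIdx n (r k)) + m) := by rw [mul_one, zpow_add₀ hq0.ne']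
    _ ≤ _ := zpow_le_zpow_right₀ one_lt_q.le (sum_rowExp_le n e hn he m hme jj hj r hr)

/-- The rows and columns `0, 1, …, k, n + 1` of an extremal minor of size `k + 2`. -/
def extSel (n k : ℕ) (hk : k ≤ n) (i : Fin (k + 2)) : Fin (n + 2) :=
  if i = Fin.last (k + 1) then Fin.last (n + 1) else ⟨i.val, by omega⟩

lemma extSel_strictMono (n k : ℕ) (hk : k ≤ n) : StrictMono (extSel n k hk) := by
  intro i j h
  have := i.isLt
  have := j.isLt
  simp only [extSel, Fin.ext_iff, Fin.lt_def, Fin.val_last] at h ⊢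
  split_ifs <;> simp only [Fin.val_last] <;> omega

lemma midMat_upper (n : ℕ) (a x : ℕ → ℤ_[q]) (w : ℤ_[q]) (i j : Fin (n + 2)) (h : j < i) :
    midMat n a x w i j = 0 := by
  have h1 : i ≠ j := h.ne'
  have h2 : i ≠ 0 := (lt_of_le_of_lt (Fin.zero_le j) h).ne'
  have h3 : j ≠ Fin.last (n + 1) := (lt_of_lt_of_le h (Fin.le_last i)).ne
  simp [midMat, h1, h2, h3]

lemma minor_ext (n m : ℕ) (e : ℕ → ℤ) (hme : e 1 = e 2 + m) (a x : ℕ → ℤ_[q]) (w : ℤ_[q])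
    (C : Matrix (Fin (n + 2)) (Fin (n + 2)) ℚ_[q])
    (hC : ∀ i j, C i j = (q : ℚ_[q]) ^ (-(rowExp e (rowIdx n i)))
      * (midMat n a x w i j : ℚ_[q]) * colFac q n m j) (k : ℕ) (hk : k ≤ n) :
    ‖(C.submatrix (extSel n k hk) (extSel n k hk)).det‖
      = (q : ℝ) ^ (∑ i ∈ Finset.range (k + 2), e i) := by
  have hq0 : (0 : ℝ) < q := zero_lt_one.trans one_lt_q
  have hdet : ((midMat n a x w).submatrix (extSel n k hk) (extSel n k hk)).det = 1 := by
    rw [Matrix.det_of_isUpperTriangular]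
    · simp [midMat]
    · intro i j h
      exact midMat_upper n a x w _ _ (extSel_strictMono n k hk h)
  have hcol : ∏ i, colFac q n m (extSel n k hk i) = (q : ℚ_[q]) ^ (-(m : ℤ)) := by
    have : ∀ i, colFac q n m (extSel n k hk i)
        = if i = Fin.last (k + 1) then (q : ℚ_[q]) ^ (-(m : ℤ)) else 1 := by
      intro i
      by_cases h : i = Fin.last (k + 1)
      · simp [colFac, extSel, h]
      · have h' : i.val ≠ k + 1 := fun h' => h (Fin.ext h')
        have : i.val ≠ n + 1 := by omega
        simp [colFac, extSel, h, Fin.ext_iff, this]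
    simp only [this, Finset.prod_ite_eq', Finset.mem_univ, if_true]
  have hsum : ∑ i, rowExp e (rowIdx n (extSel n k hk i)) + m = ∑ i ∈ Finset.range (k + 2), e i := by
    have h0 : rowIdx n (extSel n k hk 0) = 0 := by
      simp [rowIdx, extSel, Fin.ext_iff]
    have hl : rowIdx n (extSel n k hk (Fin.last (k + 1))) = 1 := by
      simp [rowIdx, extSel]
    have hi : ∀ i : Fin k, rowIdx n (extSel n k hk i.castSucc.succ) = i.val + 2 := by
      intro i
      have h1 : i.val ≠ k := by omega
      have h2 : i.val ≠ n := by omega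
      simp [rowIdx, extSel, Fin.ext_iff, h1, h2]
    rw [Fin.sum_univ_succ, Fin.sum_univ_castSucc, h0, Fin.succ_last, hl]
    simp only [hi]
    rw [Finset.sum_range_succ', Finset.sum_range_succ', ← Fin.sum_univ_eq_sum_range]
    simp [rowExp, hme]
    ring
  rw [det_minor n m e _ C hC, hdet, hcol, norm_mul, norm_mul, norm_row_prod, norm_q_zpow, ← hsum,
    zpow_add₀ hq0.ne']
  simp

/-! ### The factorization and the entries -/

lemma mul_entry (n : ℕ) (e : ℕ → ℤ) (m : ℕ) (hme : e 1 = e 2 + m)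
    (a x : ℕ → ℤ_[q]) (b y : ℤ_[q])
    (w : ℤ_[q]) (hw : w = y - ((∑ j ∈ Finset.Icc 1 n, a j * x j) + b))
    (α β : Matrix (Fin (n + 2)) (Fin (n + 2)) ℚ_[q])
    (hα : α = Matrix.of fun i j =>
      if i = 0 then
        (if j = 0 then (q : ℚ_[q]) ^ (-(e 0))
         else if j = Fin.last (n + 1) then -(q : ℚ_[q]) ^ (-(e 0) - e 1 + e 2) * (b : ℚ_[q])
         else -(q : ℚ_[q]) ^ (-(e 0)) * (a j.val : ℚ_[q]))
      else if j = i then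
        (if i = Fin.last (n + 1) then (q : ℚ_[q]) ^ (-(e 1))
         else (q : ℚ_[q]) ^ (-(e (i.val + 1))))
      else 0)
    (hβ : β = Matrix.of fun i j =>
      if j = Fin.last (n + 1) then
        (if i = Fin.last (n + 1) then 1
         else if i = 0 then (q : ℚ_[q]) ^ (-(e 1) + e 2) * (y : ℚ_[q])
         else (q : ℚ_[q]) ^ (-(e 1) + e 2) * (x i.val : ℚ_[q]))
      else if i = j then 1 else 0) (i j : Fin (n + 2)) :
    (α * β) i j = (q : ℚ_[q]) ^ (-(rowExp e (rowIdx n i)))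
      * (midMat n a x w i j : ℚ_[q]) * colFac q n m j := by
  have hq : (q : ℚ_[q]) ≠ 0 := by exact_mod_cast (Fact.out : q.Prime).ne_zero
  have hexp : -(e 1) + e 2 = -(m : ℤ) := by rw [hme]; ring
  have hlast0 : Fin.last (n + 1) ≠ 0 := by simp [Fin.ext_iff]
  by_cases hj : j = Fin.last (n + 1)
  · subst hj
    by_cases hi : i = 0
    · -- the corner entry, where the sum `∑ aⱼ xⱼ` of `w` appears
      subst hi
      have hs : ∑ j ∈ Finset.Icc 1 n, a j * x j = ∑ k : Fin n, a (k.val + 1) * x (k.val + 1) := by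
        rw [Fin.sum_univ_eq_sum_range (fun k => a (k + 1) * x (k + 1)),
          Finset.range_eq_Ico, Finset.sum_Ico_add' (fun k => a k * x k) 0 n 1]
        rfl
      have hk : ∀ k : Fin n, (k.castSucc.succ : Fin (n + 2)) ≠ Fin.last (n + 1) := by
        intro k; simp [Fin.ext_iff]; omega
      have hcorner : -(e 0) - e 1 + e 2 = -(e 0) + -(m : ℤ) := by rw [hme]; ring
      rw [Matrix.mul_apply, Fin.sum_univ_succ, Fin.sum_univ_castSucc, Fin.succ_last]
      simp only [hα, hβ, Matrix.of_apply, if_true, hlast0, hlast0.symm, if_false, hk,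
        Fin.succ_ne_zero, hexp, hcorner, midMat, colFac, rowIdx, rowExp, hw, hs]
      simp only [Fin.val_succ, Fin.val_castSucc, zpow_add₀ hq]
      push_cast
      have : ∀ k : Fin n, -(q : ℚ_[q]) ^ (-e 0) * (a (k.val + 1) : ℚ_[q])
          * ((q : ℚ_[q]) ^ (-(m : ℤ)) * (x (k.val + 1) : ℚ_[q]))
          = -(q : ℚ_[q]) ^ (-e 0) * (q : ℚ_[q]) ^ (-(m : ℤ))
            * ((a (k.val + 1) : ℚ_[q]) * (x (k.val + 1) : ℚ_[q])) := fun k => by ring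
      simp only [this, ← Finset.mul_sum]
      simp
      ring
    · -- the row `i` of `α` is supported on the diagonal
      rw [Matrix.mul_apply, Finset.sum_eq_single i]
      · by_cases hil : i = Fin.last (n + 1)
        · subst hil
          simp only [hα, hβ, Matrix.of_apply, if_true, hlast0, if_false, midMat, colFac, rowIdx,
            rowExp]
          rw [hme, neg_add, zpow_add₀ hq]
          simp
        · have : i.val ≠ 0 := fun h => hi (Fin.ext h)
          simp [hα, hβ, midMat, colFac, rowIdx, rowExp, hil, hi, hexp, this]
          ring
      · intro k _ hki
        simp [hα, hi, hki]
      · simp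
  · -- the column `j` of `β` is a unit vector
    rw [Matrix.mul_apply, Finset.sum_eq_single j]
    · by_cases hi : i = 0
      · subst hi
        by_cases hj0 : j = 0
        · subst hj0
          simp [hα, hβ, midMat, colFac, rowIdx, rowExp, hj]
        · simp [hα, hβ, midMat, colFac, rowIdx, rowExp, hj, hj0, Ne.symm hj0]
      · by_cases hij : j = i
        · subst hij
          have : j.val ≠ 0 := fun h => hi (Fin.ext h)
          simp [hα, hβ, midMat, colFac, rowIdx, rowExp, hj, hi, this]
        · simp [hα, midMat, hj, hi, hij, Ne.symm hij]
    · intro k _ hkj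
      simp [hβ, hj, hkj]
    · simp

lemma entry_le (n m : ℕ) (hn : 1 ≤ n) (e : ℕ → ℤ) (he : ∀ j, j ≤ n → e (j + 1) ≤ e j)
    (hme : e 1 = e 2 + m) (U : Matrix (Fin (n + 2)) (Fin (n + 2)) ℤ_[q])
    (C : Matrix (Fin (n + 2)) (Fin (n + 2)) ℚ_[q])
    (hC : ∀ i j, C i j = (q : ℚ_[q]) ^ (-(rowExp e (rowIdx n i))) * (U i j : ℚ_[q])
      * colFac q n m j) (i j : Fin (n + 2)) (hij : ¬ (i = 0 ∧ j = Fin.last (n + 1))) :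
    ‖C i j‖ ≤ (q : ℝ) ^ (e 0) := by
  have hq0 : (0 : ℝ) < q := zero_lt_one.trans one_lt_q
  have hanti := rowExp_anti n e hn he
  rw [hC, norm_mul, norm_mul, norm_q_zpow]
  have hU : ‖(U i j : ℚ_[q])‖ ≤ 1 := PadicInt.norm_le_one _
  by_cases hj : j = Fin.last (n + 1)
  · have hi : i ≠ 0 := fun h => hij ⟨h, hj⟩
    have hidx : 1 ≤ rowIdx n i := by
      simp only [rowIdx, hi, if_false]; split_ifs <;> omega
    have h1 : rowExp e (rowIdx n i) ≤ e 2 := by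
      simpa [rowExp] using hanti 1 _ hidx (rowIdx_lt n hn i)
    have h0 := he 0 (by omega)
    have hE : ‖colFac q n m j‖ = (q : ℝ) ^ (m : ℤ) := by
      rw [colFac, if_pos hj, norm_q_zpow]
    rw [hE]
    calc _ ≤ (q : ℝ) ^ (rowExp e (rowIdx n i)) * 1 * (q : ℝ) ^ (m : ℤ) := by gcongr
      _ = (q : ℝ) ^ (rowExp e (rowIdx n i) + m) := by rw [mul_one, zpow_add₀ hq0.ne']
      _ ≤ _ := zpow_le_zpow_right₀ one_lt_q.le (by norm_num at h0; linarith)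
  · have h1 : rowExp e (rowIdx n i) ≤ e 0 := by
      simpa [rowExp] using hanti 0 _ (Nat.zero_le _) (rowIdx_lt n hn i)
    rw [colFac, if_neg hj, norm_one, mul_one]
    calc _ ≤ (q : ℝ) ^ (rowExp e (rowIdx n i)) * 1 := by gcongr
      _ ≤ _ := by rw [mul_one]; exact zpow_le_zpow_right₀ one_lt_q.le h1

end

theorem statement9 (q : ℕ) [Fact q.Prime] (n : ℕ) (hn : 1 ≤ n)
    -- the exponents m₀ ≥ m₁ ≥ … ≥ m_{n+1}, here `e 0, e 1, …, e (n+1)`, with m₁ > m₂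
    (e : ℕ → ℤ) (he : ∀ j, j ≤ n → e (j + 1) ≤ e j) (h12 : e 2 < e 1)
    -- m := m₁ - m₂ ≥ 1
    (m : ℕ) (hm : 1 ≤ m) (hme : e 1 = e 2 + m)
    (a x : ℕ → ℤ_[q]) (b y : ℤ_[q])
    (w : ℤ_[q]) (hw : w = y - ((∑ j ∈ Finset.Icc 1 n, a j * x j) + b))
    (α β : Matrix (Fin (n + 2)) (Fin (n + 2)) ℚ_[q])
    (hα : α = Matrix.of fun i j =>
      if i = 0 then
        (if j = 0 then (q : ℚ_[q]) ^ (-(e 0))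
         else if j = Fin.last (n + 1) then -(q : ℚ_[q]) ^ (-(e 0) - e 1 + e 2) * (b : ℚ_[q])
         else -(q : ℚ_[q]) ^ (-(e 0)) * (a j.val : ℚ_[q]))
      else if j = i then
        (if i = Fin.last (n + 1) then (q : ℚ_[q]) ^ (-(e 1))
         else (q : ℚ_[q]) ^ (-(e (i.val + 1))))
      else 0)
    (hβ : β = Matrix.of fun i j =>
      if j = Fin.last (n + 1) then
        (if i = Fin.last (n + 1) then 1
         else if i = 0 then (q : ℚ_[q]) ^ (-(e 1) + e 2) * (y : ℚ_[q])
         else (q : ℚ_[q]) ^ (-(e 1) + e 2) * (x i.val : ℚ_[q]))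
      else if i = j then 1 else 0) :
    -- (i)
    ((∃ z : ℤ_[q], w = (q : ℤ_[q]) ^ m * z) →
        IsGreatest {t : ℝ | ∃ i j, t = ‖(α * β) i j‖} ((q : ℝ) ^ (e 0))) ∧
    -- (ii)
    ((∃ z : ℤ_[q], w - (q : ℤ_[q]) ^ (m - 1) = (q : ℤ_[q]) ^ m * z) →
        IsGreatest {t : ℝ | ∃ i j, t = ‖(α * β) i j‖} ((q : ℝ) ^ (e 0 + 1))) ∧
    -- in both cases, the maximal absolute value of a `jj × jj` minor, `2 ≤ jj ≤ n + 2`,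
    -- is `q^(m₀ + m₁ + ⋯ + m_{jj-1})`
    (((∃ z : ℤ_[q], w = (q : ℤ_[q]) ^ m * z) ∨
        (∃ z : ℤ_[q], w - (q : ℤ_[q]) ^ (m - 1) = (q : ℤ_[q]) ^ m * z)) →
      ∀ jj : ℕ, 2 ≤ jj → jj ≤ n + 2 →
        IsGreatest
          {t : ℝ | ∃ rsel csel : Fin jj → Fin (n + 2),
            Injective rsel ∧ Injective csel ∧
            t = ‖((α * β).submatrix rsel csel).det‖}
          ((q : ℝ) ^ (∑ i ∈ Finset.range jj, e i))) := by
  have hq0 : (0 : ℝ) < q := zero_lt_one.trans one_lt_q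
  have hC := mul_entry n e m hme a x b y w hw α β hα hβ
  generalize α * β = C at hC ⊢
  have hoff := entry_le n m hn e he hme (midMat n a x w) C hC
  have hlast0 : Fin.last (n + 1) ≠ 0 := by simp [Fin.ext_iff]
  have hcorner : ‖C 0 (Fin.last (n + 1))‖ = (q : ℝ) ^ (e 0) * ‖w‖ * (q : ℝ) ^ (m : ℤ) := by
    rw [hC, norm_mul, norm_mul, norm_q_zpow, colFac, if_pos rfl, norm_q_zpow]
    simp [midMat, rowIdx, rowExp, hlast0.symm]
  refine ⟨?_, ?_, ?_⟩
  · intro hz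
    have hwn : ‖w‖ ≤ (q : ℝ) ^ (-(m : ℤ)) := by
      rw [PadicInt.norm_le_pow_iff_mem_span_pow, Ideal.mem_span_singleton]
      exact hz
    refine ⟨⟨0, 0, ?_⟩, ?_⟩
    · rw [hC, norm_mul, norm_mul, norm_q_zpow]
      simp [midMat, rowIdx, rowExp, colFac, hlast0.symm]
    · rintro t ⟨i, j, rfl⟩
      by_cases hij : i = 0 ∧ j = Fin.last (n + 1)
      · rw [hij.1, hij.2, hcorner]
        calc _ ≤ (q : ℝ) ^ (e 0) * (q : ℝ) ^ (-(m : ℤ)) * (q : ℝ) ^ (m : ℤ) := by gcongr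
          _ = _ := by rw [mul_assoc, ← zpow_add₀ hq0.ne']; simp
      · exact hoff i j hij
  · rintro ⟨z, hz⟩
    have hwn : ‖w‖ = (q : ℝ) ^ (-((m - 1 : ℕ) : ℤ)) := by
      -- `w` is `q^(m-1)` plus an element of strictly smaller norm
      have hlt : ‖w - (q : ℤ_[q]) ^ (m - 1)‖ < ‖(q : ℤ_[q]) ^ (m - 1)‖ := by
        rw [PadicInt.norm_p_pow]
        have hle : ‖w - (q : ℤ_[q]) ^ (m - 1)‖ ≤ (q : ℝ) ^ (-(m : ℤ)) := by
          rw [PadicInt.norm_le_pow_iff_mem_span_pow, Ideal.mem_span_singleton]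
          exact ⟨z, hz⟩
        exact hle.trans_lt (zpow_lt_zpow_right₀ one_lt_q (by omega))
      have := PadicInt.norm_add_eq_max_of_ne hlt.ne
      rwa [sub_add_cancel, max_eq_right hlt.le, PadicInt.norm_p_pow] at this
    have hval : ‖C 0 (Fin.last (n + 1))‖ = (q : ℝ) ^ (e 0 + 1) := by
      rw [hcorner, hwn, ← zpow_add₀ hq0.ne', ← zpow_add₀ hq0.ne']
      congr 1
      omega
    refine ⟨⟨0, Fin.last (n + 1), hval.symm⟩, ?_⟩
    rintro t ⟨i, j, rfl⟩
    by_cases hij : i = 0 ∧ j = Fin.last (n + 1)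
    · rw [hij.1, hij.2, hval]
    · exact (hoff i j hij).trans (zpow_le_zpow_right₀ one_lt_q.le (by omega))
  · intro _ jj hj2 hjn
    refine ⟨?_, ?_⟩
    · obtain ⟨k, rfl⟩ := Nat.exists_eq_add_of_le' hj2
      have hk : k ≤ n := by omega
      exact ⟨extSel n k hk, extSel n k hk, (extSel_strictMono n k hk).injective,
        (extSel_strictMono n k hk).injective, (minor_ext n m e hme a x w C hC k hk).symm⟩
    · rintro t ⟨r, c, hr, hc, rfl⟩
      exact minor_le n m hn e he hme (midMat n a x w) C hC jj hj2 r c hr hc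
end

section
/- Let q be a prime and n ≥ 1 an integer. Let m_0 ≥ m_1 ≥ m_2 ≥ … ≥ m_{n+1} be integers with m_1 > m_2, and set m := m_1 − m_2 ≥ 1. Let a_1,…,a_n, b, x_1,…,x_n, y ∈ ℤ_q (the q-adic integers) and set w := y − (Σ_{j=1}^n a_j x_j + b) ∈ ℤ_q. Define (n+2)×(n+2) matrices α and β over ℚ_q as follows, with rows and columns indexed 0,…,n+1: α has first row (q^{−m_0}, −q^{−m_0} a_1, …, −q^{−m_0} a_n, −q^{−m_0 − m_1 + m_2} b), diagonal entries q^{−m_{j+1}} in position (j,j) for 1 ≤ j ≤ n, entry q^{−m_1} in position (n+1, n+1), and all other entries 0; β is the identity matrix modified in its last column, with entries q^{−m_1+m_2} y in position (0, n+1) and q^{−m_1+m_2} x_j in position (j, n+1) for 1 ≤ j ≤ n, and 1 in position (n+1, n+1). Then: (i) if w ∈ q^m ℤ_q, there exist k_1, k_2 ∈ GL_{n+2}(ℤ_q) such that αβ = k_1 D k_2 with D the diagonal matrix diag(q^{−m_0}, q^{−m_1}, q^{−m_2}, …, q^{−m_{n+1}}); (ii) if w − q^{m−1} ∈ q^m ℤ_q,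 there exist k_1, k_2 ∈ GL_{n+2}(ℤ_q) such that αβ = k_1 D' k_2 with D' the diagonal matrix diag(q^{−m_0−1}, q^{−m_1+1}, q^{−m_2}, …, q^{−m_{n+1}}). -/
/-!
Multiplying out, `α * β` has rows `(q^{-m₀}, -q^{-m₀} a, q^{-m₀-m} w)`,
`(0, q^{-m_{j+1}} 𝟙_j, q^{-m_{j+1}-m} x_j)` and `(0, 0, q^{-m₁})`. Since `m₂ ≥ m_{j+1}`, integral
multiples of the last row remove the entries containing `x_j`, and integral multiples of the first
column remove those containing `a_j` (`border_clear`). What is left is diagonal apart from the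
corner entry `q^{-m₀-m} w`.

In case (i) the corner is `q^{-m₀} z` with `z` integral, and a column operation removes it
(`corner_clear`). In case (ii) it is `q^{-m₀-1} u` with `u = 1 + q z` a unit, and an explicit
factorization of the `2 × 2` block on the first and last indices gives the diagonal entries
`q^{-m₀-1}` and `q^{-m₁+1}` (`corner_unit`). In both cases a permutation of the indices moves the
last diagonal entry to position `1` (`borderDiag_equiv`).
-/

open Matrix

/-- `A` and `B` lie in the same double coset of `GL_N(ℤ_q)`. -/
def IntegrallyEquiv {q : ℕ} [Fact q.Prime] {N : ℕ} (A B : Matrix (Fin N) (Fin N) ℚ_[q]) : Prop :=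
  ∃ k₁ k₂ : Matrix (Fin N) (Fin N) ℤ_[q], IsUnit k₁.det ∧ IsUnit k₂.det ∧
    A = (k₁.map fun z : ℤ_[q] => (z : ℚ_[q])) * B * (k₂.map fun z : ℤ_[q] => (z : ℚ_[q]))

section
variable {q : ℕ} [Fact q.Prime]

lemma map_coe_mul {N : ℕ} (A B : Matrix (Fin N) (Fin N) ℤ_[q]) :
    ((A * B).map fun z : ℤ_[q] => (z : ℚ_[q])) =
      (A.map fun z : ℤ_[q] => (z : ℚ_[q])) * (B.map fun z : ℤ_[q] => (z : ℚ_[q])) :=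
  Matrix.map_mul (f := PadicInt.Coe.ringHom (p := q))

lemma IntegrallyEquiv.trans {N : ℕ} {A B C : Matrix (Fin N) (Fin N) ℚ_[q]}
    (h : IntegrallyEquiv A B) (h' : IntegrallyEquiv B C) : IntegrallyEquiv A C := by
  obtain ⟨k₁, k₂, h₁, h₂, rfl⟩ := h
  obtain ⟨l₁, l₂, g₁, g₂, rfl⟩ := h'
  refine ⟨k₁ * l₁, l₂ * k₂, ?_, ?_, ?_⟩
  · rw [det_mul]; exact h₁.mul g₁
  · rw [det_mul]; exact g₂.mul h₂
  · simp only [map_coe_mul, Matrix.mul_assoc]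

/-- Reordering the diagonal entries amounts to conjugating by a permutation matrix. -/
lemma IntegrallyEquiv.diagonal_perm {N : ℕ} (d : Fin N → ℚ_[q]) (σ : Equiv.Perm (Fin N)) :
    IntegrallyEquiv (diagonal d) (diagonal (d ∘ σ)) := by
  refine ⟨(1 : Matrix _ _ _).submatrix id σ, (1 : Matrix _ _ _).submatrix σ id, ?_, ?_, ?_⟩
  · rw [det_permute', det_one, mul_one]
    exact (Units.isUnit (Equiv.Perm.sign σ)).map (Int.castRingHom ℤ_[q])
  · rw [det_permute, det_one, mul_one]
    exact (Units.isUnit (Equiv.Perm.sign σ)).map (Int.castRingHom ℤ_[q])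
  · ext i j
    rw [Matrix.mul_apply]
    simp only [Matrix.mul_diagonal, Matrix.map_apply, submatrix_apply, Function.comp]
    refine Eq.trans ?_ (Equiv.sum_comp σ (fun k => (((1 : Matrix _ _ ℤ_[q]) i k : ℤ_[q]) : ℚ_[q]) * d k *
      (((1 : Matrix _ _ ℤ_[q]) k j : ℤ_[q]) : ℚ_[q]))).symm
    simp [Matrix.one_apply, diagonal_apply, apply_ite (fun z : ℤ_[q] => (z : ℚ_[q]))]
    split_ifs with h
    · rw [h]
    · rfl

/-- A sum over `Fin (n + 2)` split into its first, middle and last terms. -/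
lemma sum_first_mid_last {M : Type*} [AddCommMonoid M] {n : ℕ} (f : Fin (n + 2) → M) :
    ∑ i, f i = f 0 + (∑ i : Fin n, f i.castSucc.succ + f (Fin.last (n + 1))) := by
  rw [Fin.sum_univ_succ, Fin.sum_univ_castSucc, Fin.succ_last]

lemma first_mid_last {n : ℕ} (i : Fin (n + 2)) :
    i = 0 ∨ i = Fin.last (n + 1) ∨ ∃ k : Fin n, i = k.castSucc.succ := by
  refine Fin.cases (Or.inl rfl) (fun i => ?_) i
  refine Fin.lastCases (Or.inr (Or.inl (Fin.succ_last _))) (fun k => ?_) i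
  exact Or.inr (Or.inr ⟨k, rfl⟩)

lemma mid_ne_last {n : ℕ} (k : Fin n) : k.castSucc.succ ≠ Fin.last (n + 1) := by
  rw [← Fin.succ_last]; simp

lemma zero_ne_mid {n : ℕ} (k : Fin n) : 0 ≠ k.castSucc.succ := (Fin.succ_ne_zero _).symm

/-- The permutation of `Fin (n + 2)` that fixes `0` and cycles the others by
`1 ↦ n + 1` and `i ↦ i - 1` for `i ≥ 2`. -/
def tailRotate (n : ℕ) : Equiv.Perm (Fin (n + 2)) :=
  Equiv.Perm.decomposeFin.symm (0, (finRotate (n + 1)).symm)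

lemma tailRotate_zero (n : ℕ) : tailRotate n 0 = 0 := by simp [tailRotate]

lemma tailRotate_one (n : ℕ) : tailRotate n 1 = Fin.last (n + 1) := by
  have h : (finRotate (n + 1)).symm 0 = Fin.last n := by
    rw [Equiv.symm_apply_eq, finRotate_last]
  have : (1 : Fin (n + 2)) = (0 : Fin (n + 1)).succ := rfl
  rw [this, tailRotate, Equiv.Perm.decomposeFin_symm_apply_succ, h]
  simp

lemma tailRotate_mid {n : ℕ} (k : Fin n) : tailRotate n k.succ.succ = k.castSucc.succ := by
  have h : (finRotate (n + 1)).symm k.succ = k.castSucc := by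
    rw [Equiv.symm_apply_eq]
    simp
  rw [tailRotate, Equiv.Perm.decomposeFin_symm_apply_succ, h]
  simp

lemma zero_or_one_or_succ {n : ℕ} (i : Fin (n + 2)) :
    i = 0 ∨ i = 1 ∨ ∃ k : Fin n, i = k.succ.succ := by
  refine Fin.cases (Or.inl rfl) (fun i => ?_) i
  refine Fin.cases (Or.inr (Or.inl rfl)) (fun k => ?_) i
  exact Or.inr (Or.inr ⟨k, rfl⟩)

/-- The diagonal vector with first entry `A`, last entry `B` and middle entries `d`. -/
def borderDiag {n : ℕ} (A B : ℚ_[q]) (d : Fin n → ℚ_[q]) : Fin (n + 2) → ℚ_[q] :=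
  Fin.cons A (Fin.snoc (α := fun _ => ℚ_[q]) d B)

@[simp] lemma borderDiag_zero {n : ℕ} (A B : ℚ_[q]) (d : Fin n → ℚ_[q]) :
    borderDiag A B d 0 = A := rfl

@[simp] lemma borderDiag_last {n : ℕ} (A B : ℚ_[q]) (d : Fin n → ℚ_[q]) :
    borderDiag A B d (Fin.last (n + 1)) = B := by
  rw [← Fin.succ_last]; simp [borderDiag]

@[simp] lemma borderDiag_mid {n : ℕ} (A B : ℚ_[q]) (d : Fin n → ℚ_[q]) (k : Fin n) :
    borderDiag A B d k.castSucc.succ = d k := by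
  simp [borderDiag]

/-- Moves the last diagonal entry to position `1`. -/
lemma borderDiag_equiv {n : ℕ} (A B : ℚ_[q]) (d : Fin n → ℚ_[q]) (D : Fin (n + 2) → ℚ_[q])
    (h0 : D 0 = A) (h1 : D 1 = B) (h2 : ∀ k : Fin n, D k.succ.succ = d k) :
    IntegrallyEquiv (diagonal (borderDiag A B d)) (diagonal D) := by
  have : D = borderDiag A B d ∘ tailRotate n := by
    funext i
    rcases zero_or_one_or_succ i with rfl | rfl | ⟨k, rfl⟩
    · simp [tailRotate_zero, h0]
    · simp [tailRotate_one, h1]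
    · simp [tailRotate_mid, h2]
  rw [this]
  exact .diagonal_perm _ _

/-- If the corner entry is an integral multiple of `A`, one column operation clears it. -/
lemma corner_clear {n : ℕ} (A B : ℚ_[q]) (d : Fin n → ℚ_[q]) (z : ℤ_[q]) :
    IntegrallyEquiv
      (diagonal (borderDiag A B d) + Matrix.single 0 (Fin.last (n + 1)) (A * (z : ℚ_[q])))
      (diagonal (borderDiag A B d)) := by
  have hne : (0 : Fin (n + 2)) ≠ Fin.last (n + 1) := (Fin.last_pos).ne
  refine ⟨1, transvection 0 (Fin.last (n + 1)) z, by simp, by simp [det_transvection_of_ne, hne], ?_⟩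
  have e1 : ((1 : Matrix (Fin (n + 2)) (Fin (n + 2)) ℤ_[q]).map fun z : ℤ_[q] => (z : ℚ_[q])) = 1 :=
    Matrix.map_one _ rfl rfl
  rw [e1, Matrix.one_mul]
  ext i j
  rw [Matrix.diagonal_mul]
  rcases first_mid_last i with rfl | rfl | ⟨k, rfl⟩ <;>
  rcases first_mid_last j with rfl | rfl | ⟨l, rfl⟩ <;>
  simp [transvection, Matrix.add_apply, Matrix.one_apply, diagonal_apply,
    hne, hne.symm, zero_ne_mid, (mid_ne_last _).symm, apply_ite (fun z : ℤ_[q] => (z : ℚ_[q]))]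

/-- With `u` a unit and `B = A * t`, the block `[[A, A u / q], [0, B]]` factors as
`[[1, 0], [t q / u, 1]] * diag (A / q, q B) * [[q, u], [-1 / u, 0]]`. -/
lemma corner_unit {n : ℕ} (A B : ℚ_[q]) (d : Fin n → ℚ_[q]) (u v t : ℤ_[q]) (huv : u * v = 1)
    (hB : B = A * (t : ℚ_[q])) :
    IntegrallyEquiv
      (diagonal (borderDiag A B d) +
        Matrix.single 0 (Fin.last (n + 1)) (A * (q : ℚ_[q])⁻¹ * (u : ℚ_[q])))
      (diagonal (borderDiag (A * (q : ℚ_[q])⁻¹) (B * (q : ℚ_[q])) d)) := by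
  have hq : (q : ℚ_[q]) ≠ 0 := by exact_mod_cast (Fact.out : q.Prime).ne_zero
  have hne : (0 : Fin (n + 2)) ≠ Fin.last (n + 1) := (Fin.last_pos).ne
  have huv' : (u : ℚ_[q]) * (v : ℚ_[q]) = 1 := by exact_mod_cast congrArg (fun z : ℤ_[q] => (z : ℚ_[q])) huv
  -- `[[q, u], [-1 / u, 0]]` as a product of three transvections
  refine ⟨transvection (Fin.last (n + 1)) 0 (t * q * v),
    transvection 0 (Fin.last (n + 1)) ((1 - q) * u) * transvection (Fin.last (n + 1)) 0 (-v) *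
      transvection 0 (Fin.last (n + 1)) u, by simp [det_transvection_of_ne, hne.symm],
    by simp [det_transvection_of_ne, hne, hne.symm], ?_⟩
  ext i j
  rw [map_coe_mul, map_coe_mul]
  rcases first_mid_last i with rfl | rfl | ⟨k, rfl⟩ <;>
  rcases first_mid_last j with rfl | rfl | ⟨l, rfl⟩ <;>
  simp [Matrix.mul_apply, sum_first_mid_last, transvection, Matrix.add_apply, Matrix.single_apply,
    Matrix.one_apply, diagonal_apply, hne, hne.symm, zero_ne_mid, (mid_ne_last _).symm,
    apply_ite (fun z : ℤ_[q] => (z : ℚ_[q]))]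
  · field_simp
    linear_combination A * (1 - (q : ℚ_[q])) * huv'
  · left
    linear_combination (1 - (q : ℚ_[q])) * (u : ℚ_[q]) * huv'
  · rw [hB]
    field_simp
    linear_combination (1 - (q : ℚ_[q])) * A * (t : ℚ_[q]) * (v : ℚ_[q]) * huv'
  · rw [hB]
    field_simp
    linear_combination A * (t : ℚ_[q]) * ((1 - (q : ℚ_[q])) * ((u : ℚ_[q]) * v) + q - 1) * huv'
  · split_ifs with h
    · rw [h]
    · rfl

/-- Row operations by the last row and column operations by the first column clear everything
off the diagonal of a matrix `[[A, -A a, c], [0, diag d, B s], [0, 0, B]]` except the corner `c`. -/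
lemma border_clear {n : ℕ} (M : Matrix (Fin (n + 2)) (Fin (n + 2)) ℚ_[q]) (A B c : ℚ_[q])
    (d : Fin n → ℚ_[q]) (a s : ℕ → ℤ_[q])
    (h00 : M 0 0 = A) (h0k : ∀ k : Fin n, M 0 k.castSucc.succ = -A * (a (k + 1) : ℚ_[q]))
    (h0l : M 0 (Fin.last (n + 1)) = c)
    (hk0 : ∀ k : Fin n, M k.castSucc.succ 0 = 0)
    (hkk : ∀ k l : Fin n, M k.castSucc.succ l.castSucc.succ = if k = l then d k else 0)
    (hkl : ∀ k : Fin n, M k.castSucc.succ (Fin.last (n + 1)) = B * (s (k + 1) : ℚ_[q]))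
    (hl0 : M (Fin.last (n + 1)) 0 = 0)
    (hlk : ∀ k : Fin n, M (Fin.last (n + 1)) k.castSucc.succ = 0)
    (hll : M (Fin.last (n + 1)) (Fin.last (n + 1)) = B) :
    IntegrallyEquiv M
      (diagonal (borderDiag A B d) + Matrix.single 0 (Fin.last (n + 1)) c) := by
  have hne : (0 : Fin (n + 2)) ≠ Fin.last (n + 1) := (Fin.last_pos).ne
  refine ⟨Matrix.of fun i j => if i = j then 1 else
      if i ≠ 0 ∧ j = Fin.last (n + 1) then s i.val else 0,
    Matrix.of fun i j => if i = j then 1 else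
      if i = 0 ∧ j ≠ Fin.last (n + 1) then -a j.val else 0, ?_, ?_, ?_⟩
  · rw [det_of_isUpperTriangular]
    · simp
    · intro i j hij
      have h1 : i ≠ j := ne_of_gt hij
      have h2 : j ≠ Fin.last (n + 1) := (lt_of_lt_of_le hij (Fin.le_last _)).ne
      simp [h1, h2]
  · rw [det_of_isUpperTriangular]
    · simp
    · intro i j hij
      have h1 : i ≠ j := ne_of_gt hij
      have h2 : i ≠ 0 := (lt_of_le_of_lt (Fin.zero_le _) hij).ne'
      simp [h1, h2]
  · ext i j
    rcases first_mid_last i with rfl | rfl | ⟨k, rfl⟩ <;>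
    rcases first_mid_last j with rfl | rfl | ⟨l, rfl⟩ <;>
    simp [Matrix.mul_apply, sum_first_mid_last, Matrix.add_apply, Matrix.single_apply,
      diagonal_apply, hne, hne.symm, zero_ne_mid, (mid_ne_last _).symm,
      apply_ite (fun z : ℤ_[q] => (z : ℚ_[q])), h00, h0k, h0l, hk0, hkk, hkl, hl0, hlk, hll]
    exact mul_comm _ _

end
theorem statement10 (q : ℕ) [Fact q.Prime] (n : ℕ) (hn : 1 ≤ n)
    -- the exponents m₀ ≥ m₁ ≥ … ≥ m_{n+1}, here `e 0, e 1, …, e (n+1)`, with m₁ > m₂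
    (e : ℕ → ℤ) (he : ∀ j, j ≤ n → e (j + 1) ≤ e j) (h12 : e 2 < e 1)
    -- m := m₁ - m₂ ≥ 1
    (m : ℕ) (hm : 1 ≤ m) (hme : e 1 = e 2 + m)
    (a x : ℕ → ℤ_[q]) (b y : ℤ_[q])
    (w : ℤ_[q]) (hw : w = y - ((∑ j ∈ Finset.Icc 1 n, a j * x j) + b))
    (α β : Matrix (Fin (n + 2)) (Fin (n + 2)) ℚ_[q])
    (hα : α = Matrix.of fun i j =>
      if i = 0 then
        (if j = 0 then (q : ℚ_[q]) ^ (-(e 0))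
         else if j = Fin.last (n + 1) then -(q : ℚ_[q]) ^ (-(e 0) - e 1 + e 2) * (b : ℚ_[q])
         else -(q : ℚ_[q]) ^ (-(e 0)) * (a j.val : ℚ_[q]))
      else if j = i then
        (if i = Fin.last (n + 1) then (q : ℚ_[q]) ^ (-(e 1))
         else (q : ℚ_[q]) ^ (-(e (i.val + 1))))
      else 0)
    (hβ : β = Matrix.of fun i j =>
      if j = Fin.last (n + 1) then
        (if i = Fin.last (n + 1) then 1
         else if i = 0 then (q : ℚ_[q]) ^ (-(e 1) + e 2) * (y : ℚ_[q])
         else (q : ℚ_[q]) ^ (-(e 1) + e 2) * (x i.val : ℚ_[q]))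
      else if i = j then 1 else 0) :
    -- (i) Smith normal form with diagonal `q^{-m₀}, q^{-m₁}, …, q^{-m_{n+1}}`
    ((∃ z : ℤ_[q], w = (q : ℤ_[q]) ^ m * z) →
      ∃ k₁ k₂ : Matrix (Fin (n + 2)) (Fin (n + 2)) ℤ_[q],
        IsUnit k₁.det ∧ IsUnit k₂.det ∧
        α * β =
          (k₁.map fun z : ℤ_[q] => (z : ℚ_[q])) *
            Matrix.diagonal (fun i : Fin (n + 2) => (q : ℚ_[q]) ^ (-(e i.val))) *
            (k₂.map fun z : ℤ_[q] => (z : ℚ_[q]))) ∧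
    -- (ii) Smith normal form with diagonal `q^{-m₀-1}, q^{-m₁+1}, q^{-m₂}, …, q^{-m_{n+1}}`
    ((∃ z : ℤ_[q], w - (q : ℤ_[q]) ^ (m - 1) = (q : ℤ_[q]) ^ m * z) →
      ∃ k₁ k₂ : Matrix (Fin (n + 2)) (Fin (n + 2)) ℤ_[q],
        IsUnit k₁.det ∧ IsUnit k₂.det ∧
        α * β =
          (k₁.map fun z : ℤ_[q] => (z : ℚ_[q])) *
            Matrix.diagonal (fun i : Fin (n + 2) =>
              if i = 0 then (q : ℚ_[q]) ^ (-(e 0) - 1)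
              else if i = 1 then (q : ℚ_[q]) ^ (-(e 1) + 1)
              else (q : ℚ_[q]) ^ (-(e i.val))) *
            (k₂.map fun z : ℤ_[q] => (z : ℚ_[q]))) := by
  have hq : (q : ℚ_[q]) ≠ 0 := by exact_mod_cast (Fact.out : q.Prime).ne_zero
  have hne : (0 : Fin (n + 2)) ≠ Fin.last (n + 1) := (Fin.last_pos).ne
  have hanti : ∀ k, k < n → e (k + 2) ≤ e 2 := by
    intro k
    induction k with
    | zero => intro _; exact le_rfl
    | succ k ih => intro hk; exact (he (k + 2) (by omega)).trans (ih (by omega))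
  have hwQ : (w : ℚ_[q]) = y - ((∑ k : Fin n, (a (k + 1) : ℚ_[q]) * x (k + 1)) + b) := by
    have : ∑ j ∈ Finset.Icc 1 n, a j * x j = ∑ k : Fin n, a (k + 1) * x (k + 1) := by
      rw [Fin.sum_univ_eq_sum_range (fun k => a (k + 1) * x (k + 1)) n,
        Finset.range_eq_Ico, Finset.sum_Ico_add' (fun k => a k * x k) 0 n 1]
      rfl
    rw [hw, this]
    push_cast
    simp
  have key : IntegrallyEquiv (α * β)
      (diagonal (borderDiag ((q : ℚ_[q]) ^ (-(e 0))) ((q : ℚ_[q]) ^ (-(e 1)))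
          (fun k : Fin n => (q : ℚ_[q]) ^ (-(e (k + 2))))) +
        Matrix.single 0 (Fin.last (n + 1)) ((q : ℚ_[q]) ^ (-(e 0) - m) * (w : ℚ_[q]))) := by
    apply border_clear _ _ _ _ _ a (fun j => (q : ℤ_[q]) ^ (e 2 - e (j + 1)).toNat * x j)
    all_goals
      intros
      simp [hα, hβ, Matrix.mul_apply, sum_first_mid_last, hne, hne.symm, zero_ne_mid,
        (mid_ne_last _).symm]
    · rw [hwQ]
      have h1 : (q : ℚ_[q]) ^ (-(e 1) + e 2) = (q : ℚ_[q]) ^ (-(m : ℤ)) := by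
        congr 1; omega
      have h2 : (q : ℚ_[q]) ^ (-(e 0) - e 1 + e 2) = (q : ℚ_[q]) ^ (-(e 0) - m) := by
        congr 1; omega
      have h3 : (q : ℚ_[q]) ^ (-(e 0) - m) = ((q : ℚ_[q]) ^ e 0)⁻¹ * (q : ℚ_[q]) ^ (-(m : ℤ)) := by
        rw [sub_eq_add_neg, zpow_add₀ hq, _root_.zpow_neg]
      have h4 : ∑ k : Fin n, ((q : ℚ_[q]) ^ e 0)⁻¹ * (a (k + 1) : ℚ_[q]) *
            ((q : ℚ_[q]) ^ (-(m : ℤ)) * (x (k + 1) : ℚ_[q])) =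
          ((q : ℚ_[q]) ^ e 0)⁻¹ * (q : ℚ_[q]) ^ (-(m : ℤ)) *
            ∑ k : Fin n, (a (k + 1) : ℚ_[q]) * x (k + 1) := by
        rw [Finset.mul_sum]
        exact Finset.sum_congr rfl fun k _ => by ring
      rw [h2, h1, h4, h3]
      ring
    · simp only [eq_comm]
    · rename_i k
      have hk := hanti k k.isLt
      rw [← zpow_natCast, Int.toNat_of_nonneg (sub_nonneg.2 hk), ← mul_assoc, ← mul_assoc,
        ← _root_.zpow_neg, ← _root_.zpow_neg, ← zpow_add₀ hq, ← zpow_add₀ hq]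
      congr 2
      ring
  constructor
  · rintro ⟨z, hz⟩
    refine key.trans (IntegrallyEquiv.trans (?_ : IntegrallyEquiv _ _)
      (borderDiag_equiv ((q : ℚ_[q]) ^ (-(e 0))) ((q : ℚ_[q]) ^ (-(e 1)))
        (fun k : Fin n => (q : ℚ_[q]) ^ (-(e (k + 2)))) _ (by simp) (by simp) (fun k => by simp)))
    convert corner_clear _ _ _ z using 3
    rw [hz]
    push_cast
    rw [zpow_sub₀ hq, zpow_natCast]
    field_simp
  · rintro ⟨z, hz⟩
    have hu : IsUnit (1 + (q : ℤ_[q]) * z) := by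
      have h : -((q : ℤ_[q]) * z) ∈ nonunits ℤ_[q] := fun h =>
        PadicInt.prime_p.not_isUnit (isUnit_of_mul_isUnit_left (IsUnit.neg_iff _ |>.1 h))
      simpa using IsLocalRing.isUnit_one_sub_self_of_mem_nonunits _ h
    obtain ⟨v, huv⟩ := hu.exists_right_inv
    have h01 : e 1 ≤ e 0 := he 0 (Nat.zero_le _)
    refine key.trans (IntegrallyEquiv.trans (?_ : IntegrallyEquiv _ _)
      (borderDiag_equiv ((q : ℚ_[q]) ^ (-(e 0)) * (q : ℚ_[q])⁻¹) ((q : ℚ_[q]) ^ (-(e 1)) * q)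
        (fun k : Fin n => (q : ℚ_[q]) ^ (-(e (k + 2)))) _ ?_ ?_ ?_))
    · convert corner_unit _ _ _ (1 + (q : ℤ_[q]) * z) v ((q : ℤ_[q]) ^ (e 0 - e 1).toNat) huv ?_
        using 3
      · have : w = (q : ℤ_[q]) ^ (m - 1) * (1 + q * z) := by
          have h := pow_succ (q : ℤ_[q]) (m - 1)
          rw [Nat.sub_add_cancel hm] at h
          rw [h] at hz
          linear_combination hz
        rw [this]
        push_cast
        rw [zpow_sub₀ hq, zpow_natCast]
        have h := pow_succ (q : ℚ_[q]) (m - 1)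
        rw [Nat.sub_add_cancel hm] at h
        rw [h]
        field_simp
      · push_cast
        rw [← zpow_natCast, Int.toNat_of_nonneg (by omega), ← zpow_add₀ hq]
        congr 1; ring
    · rw [if_pos rfl, zpow_sub_one₀ hq]
    · rw [if_neg (by simp), if_pos rfl, zpow_add_one₀ hq]
    · intro k
      rw [if_neg (by simp), if_neg (by simp [Fin.ext_iff])]
      simp
end
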